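/- arXiv:2512.03160 — 3 statements merged into one kernel-verified Lean document; each statement's English description precedes it below -/
import Mathlib

section
/- Let A ∈ ℝ^{n×n}. If there exist a real matrix P ∈ ℝ^{m×n} of full column rank (rank(P) = n, m ≥ n) and a real matrix Q ∈ ℝ^{m×m} such that P·A = Q·P and ‖Q‖_∞ < 1, then every complex eigenvalue λ of A satisfies |λ| < 1; equivalently, the discrete-time linear system x_{t+1} = A x_t is asymptotically stable. -/
open Matrix Finset

/-- Logarithmic norm induced by the vector ∞-norm: `μ_∞(Q) = max_i (Q i i + ∑_{j≠i} |Q i j|)`. -/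
noncomputable def muInf {m : ℕ} (Q : Matrix (Fin m) (Fin m) ℝ) : ℝ :=
  ⨆ i, (Q i i + ∑ j ∈ Finset.univ.filter (fun j => j ≠ i), |Q i j|)

/-- Induced matrix ∞-norm: `‖Q‖_∞ = max_i ∑_j |Q i j|`. -/
noncomputable def normInf {m p : ℕ} (Q : Matrix (Fin m) (Fin p) ℝ) : ℝ :=
  ⨆ i, ∑ j, |Q i j|

/-- Vector ∞-norm: `‖v‖_∞ = max_i |v i|`. -/
noncomputable def vecNormInf {m : ℕ} (v : Fin m → ℝ) : ℝ := ⨆ i, |v i|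

/-- Metzlerization `Q^m`: keep the diagonal, take absolute values off-diagonal. -/
def metzlerize {m : ℕ} (Q : Matrix (Fin m) (Fin m) ℝ) : Matrix (Fin m) (Fin m) ℝ :=
  Matrix.of fun i j => if i = j then Q i j else |Q i j|

/-- Entrywise absolute value `|M|`. -/
def matAbs {p q : ℕ} (M : Matrix (Fin p) (Fin q) ℝ) : Matrix (Fin p) (Fin q) ℝ :=
  Matrix.of fun i j => |M i j|

/-- Entrywise positive part `M⁺`. -/
def matPos {p q : ℕ} (M : Matrix (Fin p) (Fin q) ℝ) : Matrix (Fin p) (Fin q) ℝ :=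
  Matrix.of fun i j => max (M i j) 0

/-- Entrywise negative part `M⁻ := M⁺ − M`. -/
def matNeg {p q : ℕ} (M : Matrix (Fin p) (Fin q) ℝ) : Matrix (Fin p) (Fin q) ℝ :=
  matPos M - M

/-- `Q↑ := Q^d + (Q^{nd})⁺` (diagonal plus positive part of the off-diagonal). -/
def matUp {m : ℕ} (Q : Matrix (Fin m) (Fin m) ℝ) : Matrix (Fin m) (Fin m) ℝ :=
  Matrix.of fun i j => if i = j then Q i j else max (Q i j) 0

/-- `Q↓ := (Q^{nd})⁻` (negative part of the off-diagonal). -/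
def matDown {m : ℕ} (Q : Matrix (Fin m) (Fin m) ℝ) : Matrix (Fin m) (Fin m) ℝ :=
  Matrix.of fun i j => if i = j then 0 else max (Q i j) 0 - Q i j

/-!
A left inverse of `P` turns left inverses of `μ - Q` into left inverses of `μ - A`, so every
eigenvalue of `A` is one of `Q`. Left inverses survive extension of scalars, which settles complex
eigenvalues, and an eigenvalue of `Q` is at most `‖Q‖_∞` in absolute value.
-/

section Intertwining

variable {m n R S : Type*} [Fintype m] [Fintype n] [DecidableEq n]

theorem exists_left_inverse_of_rank_eq_card [Field S] {P : Matrix m n S}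
    (hP : P.rank = Fintype.card n) : ∃ L : Matrix n m S, L * P = 1 := by
  have range_eq_top : LinearMap.range Pᵀ.mulVecLin = ⊤ :=
    Submodule.eq_top_of_finrank_eq <| by
      rw [Module.finrank_fintype_fun_eq_card, ← hP, ← rank_transpose, Matrix.rank]
  refine vecMul_surjective_iff_exists_left_inverse.mp fun v ↦ ?_
  obtain ⟨w, hw⟩ := LinearMap.range_eq_top.mp range_eq_top v
  exact ⟨w, by rwa [mulVecLin_apply, mulVec_transpose] at hw⟩

theorem spectrum_subset_of_mul_eq_mul [DecidableEq m] [CommSemiring R] [Ring S] [Algebra R S]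
    [IsStablyFiniteRing S] {A : Matrix n n S} {Q : Matrix m m S} {P : Matrix m n S}
    {L : Matrix n m S} (hLP : L * P = 1) (hPA : P * A = Q * P) :
    spectrum R A ⊆ spectrum R Q := by
  refine fun r hrA hrQ ↦ hrA ?_
  obtain ⟨B, hB⟩ := isUnit_iff_exists_inv'.mp hrQ
  have resolvent_intertwines :
      P * (algebraMap R _ r - A) = (algebraMap R _ r - Q) * P := by
    simp only [Matrix.mul_sub, Matrix.sub_mul, hPA, Algebra.algebraMap_eq_smul_one,
      Matrix.mul_smul, Matrix.smul_mul, Matrix.mul_one, Matrix.one_mul]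
  refine .of_mul_eq_one_right (L * B * P) ?_
  calc L * B * P * (algebraMap R _ r - A)
      = L * (B * (algebraMap R _ r - Q)) * P := by
        simp only [Matrix.mul_assoc, resolvent_intertwines]
    _ = 1 := by rw [hB, Matrix.mul_one, hLP]

end Intertwining

section LinftyOpNorm

open scoped Matrix.Norms.Operator

variable {m n α β 𝕜 𝕜' : Type*} [Fintype m] [Fintype n]

theorem linfty_opNorm_map_eq [SeminormedAddCommGroup α] [SeminormedAddCommGroup β]
    (A : Matrix m n α) (f : α → β) (hf : ∀ a, ‖f a‖ = ‖a‖) : ‖A.map f‖ = ‖A‖ := by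
  have hf' (a : α) : ‖f a‖₊ = ‖a‖₊ := NNReal.eq (hf a)
  simp only [linfty_opNorm_def, map_apply, hf']

theorem normInf_eq_linfty_opNorm {m p : ℕ} (Q : Matrix (Fin m) (Fin p) ℝ) : normInf Q = ‖Q‖ := by
  rw [linfty_opNorm_def, Finset.sup_univ_eq_ciSup, NNReal.coe_iSup]
  simp only [normInf, NNReal.coe_sum, coe_nnnorm, Real.norm_eq_abs]

variable [DecidableEq n] [NormedField 𝕜]

theorem norm_le_linfty_opNorm_of_mem_spectrum {A : Matrix n n 𝕜} {r : 𝕜}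
    (hr : r ∈ spectrum 𝕜 A) : ‖r‖ ≤ ‖A‖ := by
  rw [← spectrum_toLin', ← Module.End.hasEigenvalue_iff_mem_spectrum] at hr
  obtain ⟨v, hv⟩ := hr.exists_hasEigenvector
  have hAv : A *ᵥ v = r • v := hv.apply_eq_smul
  refine le_of_mul_le_mul_right ?_ (norm_pos_iff.mpr hv.2)
  calc ‖r‖ * ‖v‖ = ‖A *ᵥ v‖ := by rw [hAv, norm_smul]
    _ ≤ ‖A‖ * ‖v‖ := linfty_opNorm_mulVec A v

theorem schur_of_polyhedral_lyapunov_general [NormedField 𝕜'] [NormedAlgebra 𝕜 𝕜']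
    {A : Matrix n n 𝕜} {P : Matrix m n 𝕜} {Q : Matrix m m 𝕜}
    (hP : P.rank = Fintype.card n) (hPA : P * A = Q * P)
    {r : 𝕜'} (hr : r ∈ spectrum 𝕜' (A.map (algebraMap 𝕜 𝕜'))) :
    ‖r‖ ≤ ‖Q‖ := by
  classical
  obtain ⟨L, hLP⟩ := exists_left_inverse_of_rank_eq_card hP
  let φ := algebraMap 𝕜 𝕜'
  have hLP' : L.map φ * P.map φ = 1 := by
    rw [← Matrix.map_mul, hLP, Matrix.map_one _ φ.map_zero φ.map_one]
  have hPA' : P.map φ * A.map φ = Q.map φ * P.map φ := by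
    rw [← Matrix.map_mul, hPA, Matrix.map_mul]
  calc ‖r‖ ≤ ‖Q.map φ‖ :=
        norm_le_linfty_opNorm_of_mem_spectrum (spectrum_subset_of_mul_eq_mul hLP' hPA' hr)
    _ = ‖Q‖ := linfty_opNorm_map_eq Q φ (norm_algebraMap' 𝕜')

end LinftyOpNorm

/-- existence of full-column-rank `P` and `Q` with `P A = Q P`, `‖Q‖_∞ < 1`
implies Schur stability of `A`. -/
theorem schur_of_polyhedral_lyapunov {n m : ℕ} (hnm : n ≤ m)
    (A : Matrix (Fin n) (Fin n) ℝ) (P : Matrix (Fin m) (Fin n) ℝ)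
    (Q : Matrix (Fin m) (Fin m) ℝ) (hrank : P.rank = n)
    (hPA : P * A = Q * P) (hQ : normInf Q < 1) :
    ∀ lam ∈ spectrum ℂ (A.map (algebraMap ℝ ℂ)), ‖lam‖ < 1 := by
  intro lam hlam
  rw [normInf_eq_linfty_opNorm] at hQ
  exact (schur_of_polyhedral_lyapunov_general (by rwa [Fintype.card_fin]) hPA hlam).trans_lt hQ
end

section
/- (Correctness of the proposed observer, discrete-time case.) Consider the discrete-time linear system x_{t+1} = A x_t + B u_t + W w_t, y_t = C x_t + D u_t + V v_t, with state x_t ∈ ℝ^n, input u_t ∈ ℝ^s, output y_t ∈ ℝ^l, and noise signals satisfying w̲ ≤ w_t ≤ w̄ and v̲ ≤ v_t ≤ v̄ for all t ∈ ℕ (entrywise). Let L ∈ ℝ^{n×l} be any observer gain, and suppose P ∈ ℝ^{m×n} and Q ∈ ℝ^{m×m} satisfy P(A − LC) = QP. Let z̲, z̄ : ℕ → ℝ^m satisfy the observer recursions z̲_{t+1} = Q⁺ z̲_t − Q⁻ z̄_t + (PW)⁺ w̲ − (PW)⁻ w̄ + (PLV)⁻ v̲ − (PLV)⁺ v̄ +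 PL y_t + P(B − LD) u_t and z̄_{t+1} = Q⁺ z̄_t − Q⁻ z̲_t + (PW)⁺ w̄ − (PW)⁻ w̲ + (PLV)⁻ v̄ − (PLV)⁺ v̲ + PL y_t + P(B − LD) u_t, with initial condition z̲₀ ≤ P x₀ ≤ z̄₀. Then z̲_t ≤ P x_t ≤ z̄_t for all t ∈ ℕ. -/
open Matrix Finset

/-! For entrywise nonnegative `M₁`, `M₂`, the function `F a b = M₁ a - M₂ b` is increasing in `a`
and decreasing in `b`, and `F a a = (M₁ - M₂) a`; hence `F lo hi ≤ (M₁ - M₂) a ≤ F hi lo` whenever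
`lo ≤ a ≤ hi`. Output injection together with `P (A - L C) = Q P` turns the plant into a recursion
for `P x` driven by `Q`, `P W` and `-P L V`. Each observer bound replaces these three matrices by
such functions `F`, so the framing passes from one time step to the next. -/

theorem mulVec_mono_of_nonneg {R ι κ : Type*} [Fintype κ] [Semiring R] [PartialOrder R]
    [IsOrderedRing R] {M : Matrix ι κ R} (hM : ∀ i j, 0 ≤ M i j) : Monotone (M *ᵥ ·) :=
  fun _ _ hab i ↦ dotProduct_le_dotProduct_of_nonneg_left hab (hM i)

section NonnegSplit

variable {R ι κ : Type*} [Ring R] [PartialOrder R]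

/-- A decomposition `M = pos - neg` of a matrix into entrywise nonnegative matrices, such as
`M = M⁺ - M⁻`, from which interval bounds on `M *ᵥ a` are computed. The two parts are allowed to
have overlapping supports. -/
structure NonnegSplit (M : Matrix ι κ R) where
  pos : Matrix ι κ R
  neg : Matrix ι κ R
  pos_nonneg : ∀ i j, 0 ≤ pos i j
  neg_nonneg : ∀ i j, 0 ≤ neg i j
  pos_sub_neg : pos - neg = M

namespace NonnegSplit

variable {M : Matrix ι κ R}

/-- Exchanging the two parts of a decomposition of `M` gives one of `-M`. -/
def swap (S : NonnegSplit M) : NonnegSplit (-M) where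
  pos := S.neg
  neg := S.pos
  pos_nonneg := S.neg_nonneg
  neg_nonneg := S.pos_nonneg
  pos_sub_neg := by rw [← neg_sub, S.pos_sub_neg]

variable [Fintype κ]

/-- The decomposition function, in the sense of mixed-monotone systems, of the linear map
`M *ᵥ ·`; it computes both interval bounds, `decomp lo hi` and `decomp hi lo`. -/
def decomp (S : NonnegSplit M) (a b : κ → R) : ι → R :=
  S.pos *ᵥ a - S.neg *ᵥ b

theorem decomp_self (S : NonnegSplit M) (a : κ → R) : S.decomp a a = M *ᵥ a := by
  rw [decomp, ← sub_mulVec, S.pos_sub_neg]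

variable [IsOrderedRing R]

theorem decomp_le_decomp (S : NonnegSplit M) {a a' b b' : κ → R} (ha : a ≤ a') (hb : b' ≤ b) :
    S.decomp a b ≤ S.decomp a' b' :=
  sub_le_sub (mulVec_mono_of_nonneg S.pos_nonneg ha) (mulVec_mono_of_nonneg S.neg_nonneg hb)

theorem decomp_le_mulVec (S : NonnegSplit M) {lo a hi : κ → R} (h : lo ≤ a ∧ a ≤ hi) :
    S.decomp lo hi ≤ M *ᵥ a :=
  (S.decomp_le_decomp h.1 h.2).trans_eq (S.decomp_self a)

theorem mulVec_le_decomp (S : NonnegSplit M) {lo a hi : κ → R} (h : lo ≤ a ∧ a ≤ hi) :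
    M *ᵥ a ≤ S.decomp hi lo :=
  (S.decomp_self a).symm.trans_le (S.decomp_le_decomp h.2 h.1)

end NonnegSplit

end NonnegSplit

/-- The decomposition `M = M⁺ - M⁻` into the entrywise positive and negative parts. -/
def matPosNegSplit {p q : ℕ} (M : Matrix (Fin p) (Fin q) ℝ) : NonnegSplit M where
  pos := matPos M
  neg := matNeg M
  pos_nonneg _ _ := le_max_right _ _
  neg_nonneg _ _ := sub_nonneg.2 (le_max_left _ _)
  pos_sub_neg := sub_sub_cancel _ _

section Observer

variable {R ι σ l ω ν κ : Type*} [Ring R]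
  [Fintype ι] [Fintype σ] [Fintype l] [Fintype ω] [Fintype ν] [Fintype κ]

/-- Output injection: the `L` terms cancel in total, but they make the coefficient of the state
`P' * (A - L * C)`, which factors through `P`. -/
theorem mulVec_plant_step_eq {A : Matrix ι ι R} {B : Matrix ι σ R} {W : Matrix ι ω R}
    {C : Matrix l ι R} {D : Matrix l σ R} {V : Matrix l ν R} {L : Matrix ι l R}
    {P P' : Matrix κ ι R} {Q : Matrix κ κ R} (hPQ : P' * (A - L * C) = Q * P)
    (x : ι → R) (u : σ → R) (w : ω → R) (v : ν → R) :
    P' *ᵥ (A *ᵥ x + B *ᵥ u + W *ᵥ w) =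
      Q *ᵥ (P *ᵥ x) + (P' * W) *ᵥ w + (-(P' * L * V)) *ᵥ v
        + (P' * L) *ᵥ (C *ᵥ x + D *ᵥ u + V *ᵥ v) + (P' * (B - L * D)) *ᵥ u := by
  rw [mulVec_mulVec, ← hPQ]
  simp only [Matrix.mul_sub, sub_mulVec, neg_mulVec, mulVec_add, mulVec_mulVec, Matrix.mul_assoc]
  abel

theorem observer_correctness_DT_general [PartialOrder R] [IsOrderedRing R]
    (A : ℕ → Matrix ι ι R) (B : ℕ → Matrix ι σ R) (W : ℕ → Matrix ι ω R)
    (C : ℕ → Matrix l ι R) (D : ℕ → Matrix l σ R) (V : ℕ → Matrix l ν R)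
    (L : ℕ → Matrix ι l R) (P : ℕ → Matrix κ ι R) (Q : ℕ → Matrix κ κ R)
    (hPQ : ∀ t, P (t + 1) * (A t - L t * C t) = Q t * P t)
    (SQ : ∀ t, NonnegSplit (Q t)) (SW : ∀ t, NonnegSplit (P (t + 1) * W t))
    (SV : ∀ t, NonnegSplit (-(P (t + 1) * L t * V t)))
    (u : ℕ → σ → R) (w wlo whi : ℕ → ω → R) (v vlo vhi : ℕ → ν → R)
    (hw : ∀ t, wlo t ≤ w t ∧ w t ≤ whi t) (hv : ∀ t, vlo t ≤ v t ∧ v t ≤ vhi t)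
    (x : ℕ → ι → R) (y : ℕ → l → R)
    (hx : ∀ t, x (t + 1) = A t *ᵥ x t + B t *ᵥ u t + W t *ᵥ w t)
    (hy : ∀ t, y t = C t *ᵥ x t + D t *ᵥ u t + V t *ᵥ v t)
    (zlo zhi : ℕ → κ → R)
    (hlo : ∀ t, zlo (t + 1) =
      (SQ t).decomp (zlo t) (zhi t) + (SW t).decomp (wlo t) (whi t)
        + (SV t).decomp (vlo t) (vhi t)
        + (P (t + 1) * L t) *ᵥ y t + (P (t + 1) * (B t - L t * D t)) *ᵥ u t)
    (hhi : ∀ t, zhi (t + 1) =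
      (SQ t).decomp (zhi t) (zlo t) + (SW t).decomp (whi t) (wlo t)
        + (SV t).decomp (vhi t) (vlo t)
        + (P (t + 1) * L t) *ᵥ y t + (P (t + 1) * (B t - L t * D t)) *ᵥ u t)
    (h0 : zlo 0 ≤ P 0 *ᵥ x 0 ∧ P 0 *ᵥ x 0 ≤ zhi 0) (t : ℕ) :
    zlo t ≤ P t *ᵥ x t ∧ P t *ᵥ x t ≤ zhi t := by
  induction t with
  | zero => exact h0
  | succ t ih =>
    rw [hx, mulVec_plant_step_eq (hPQ t) (x t) (u t) (w t) (v t), ← hy, hlo, hhi]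
    constructor
    · gcongr
      · exact (SQ t).decomp_le_mulVec ih
      · exact (SW t).decomp_le_mulVec (hw t)
      · exact (SV t).decomp_le_mulVec (hv t)
    · gcongr
      · exact (SQ t).mulVec_le_decomp ih
      · exact (SW t).mulVec_le_decomp (hw t)
      · exact (SV t).mulVec_le_decomp (hv t)

end Observer

/-- correctness of the proposed observer (discrete-time case):
the observer states frame the transformed true state, `z̲_t ≤ P x_t ≤ z̄_t`. -/
theorem observer_correctness_DT {n m s l nw nv : ℕ}
    (A : Matrix (Fin n) (Fin n) ℝ) (B : Matrix (Fin n) (Fin s) ℝ)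
    (W : Matrix (Fin n) (Fin nw) ℝ) (C : Matrix (Fin l) (Fin n) ℝ)
    (D : Matrix (Fin l) (Fin s) ℝ) (V : Matrix (Fin l) (Fin nv) ℝ)
    (L : Matrix (Fin n) (Fin l) ℝ)
    (P : Matrix (Fin m) (Fin n) ℝ) (Q : Matrix (Fin m) (Fin m) ℝ)
    (hPQ : P * (A - L * C) = Q * P)
    (u : ℕ → Fin s → ℝ) (w : ℕ → Fin nw → ℝ) (v : ℕ → Fin nv → ℝ)
    (wlo whi : Fin nw → ℝ) (vlo vhi : Fin nv → ℝ)
    (hw : ∀ t, wlo ≤ w t ∧ w t ≤ whi) (hv : ∀ t, vlo ≤ v t ∧ v t ≤ vhi)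
    (x : ℕ → Fin n → ℝ) (y : ℕ → Fin l → ℝ)
    (hx : ∀ t, x (t + 1) = A.mulVec (x t) + B.mulVec (u t) + W.mulVec (w t))
    (hy : ∀ t, y t = C.mulVec (x t) + D.mulVec (u t) + V.mulVec (v t))
    (zlo zhi : ℕ → Fin m → ℝ)
    (hlo : ∀ t, zlo (t + 1) =
      (matPos Q).mulVec (zlo t) - (matNeg Q).mulVec (zhi t)
        + (matPos (P * W)).mulVec wlo - (matNeg (P * W)).mulVec whi
        + (matNeg (P * L * V)).mulVec vlo - (matPos (P * L * V)).mulVec vhi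
        + (P * L).mulVec (y t) + (P * (B - L * D)).mulVec (u t))
    (hhi : ∀ t, zhi (t + 1) =
      (matPos Q).mulVec (zhi t) - (matNeg Q).mulVec (zlo t)
        + (matPos (P * W)).mulVec whi - (matNeg (P * W)).mulVec wlo
        + (matNeg (P * L * V)).mulVec vhi - (matPos (P * L * V)).mulVec vlo
        + (P * L).mulVec (y t) + (P * (B - L * D)).mulVec (u t))
    (h0 : zlo 0 ≤ P.mulVec (x 0) ∧ P.mulVec (x 0) ≤ zhi 0) :
    ∀ t : ℕ, zlo t ≤ P.mulVec (x t) ∧ P.mulVec (x t) ≤ zhi t := by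
  simp only [add_sub_assoc] at hlo hhi
  exact observer_correctness_DT_general (fun _ ↦ A) (fun _ ↦ B) (fun _ ↦ W) (fun _ ↦ C)
    (fun _ ↦ D) (fun _ ↦ V) (fun _ ↦ L) (fun _ ↦ P) (fun _ ↦ Q) (fun _ ↦ hPQ)
    (fun _ ↦ matPosNegSplit Q) (fun _ ↦ matPosNegSplit (P * W))
    (fun _ ↦ (matPosNegSplit (P * L * V)).swap) u w (fun _ ↦ wlo) (fun _ ↦ whi)
    v (fun _ ↦ vlo) (fun _ ↦ vhi) hw hv x y hx hy zlo zhi hlo hhi h0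
end

section
/- (Input-to-state stability of the framer error, continuous-time case.) Let Q ∈ ℝ^{m×m} with μ := μ_∞(Q) < 0, let f ∈ ℝ^m, and let ε : ℝ → ℝ^m be differentiable with ε'(t) = Q^m ε(t) + f for all t ≥ 0, where Q^m is the Metzlerization of Q. Then for all t ≥ 0, ‖ε(t)‖_∞ ≤ exp(μ t) ‖ε(0)‖_∞ + ((exp(μ t) − 1)/μ) ‖f‖_∞. In particular, the error is input-to-state stable: ‖ε(t)‖_∞ ≤ exp(μ t) ‖ε(0)‖_∞ + (−1/μ) ‖f‖_∞. -/
open Matrix Finset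

/-!
The logarithmic norm is the right derivative at `0` of `h ↦ ‖1 + h Q‖`; for the `∞`-norm the
difference quotient is even constant for small `h > 0`. Hence along a solution of `ε' = Q ε + f` the
right derivative of `‖ε‖` is at most `μ ‖ε‖ + ‖f‖`, and Grönwall's inequality, which is valid for a
growth rate of either sign, gives the bound. Metzlerization does not change `μ`.
-/

section LogNormGronwall

open Filter Set Topology

variable {E : Type*} [NormedAddCommGroup E] [NormedSpace ℝ E] {μ : ℝ}

theorem eventually_slope_norm_lt_of_norm_add_smul_le {u : ℝ → E} {w g : E} {x r : ℝ}
    (hu : HasDerivWithinAt u (w + g) (Ici x) x)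
    (hw : ∀ᶠ h in 𝓝[>] (0 : ℝ), ‖u x + h • w‖ ≤ (1 + h * μ) * ‖u x‖)
    (hr : μ * ‖u x‖ + ‖g‖ < r) :
    ∀ᶠ z in 𝓝[>] x, (z - x)⁻¹ * (‖u z‖ - ‖u x‖) < r := by
  have hslope : Tendsto (fun z => ‖slope u x z - w‖) (𝓝[>] x) (𝓝 ‖g‖) := by
    have := (hasDerivWithinAt_iff_tendsto_slope' self_notMem_Ioi).1 hu.Ioi_of_Ici
    simpa only [add_sub_cancel_left] using (this.sub_const w).norm
  have hshift : Tendsto (fun z => z - x) (𝓝[>] x) (𝓝[>] 0) := by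
    have : Tendsto (fun z => z - x) (𝓝 x) (𝓝 0) := tendsto_sub_nhds_zero_iff.2 tendsto_id
    exact tendsto_nhdsWithin_iff.2 ⟨this.mono_left nhdsWithin_le_nhds,
      eventually_mem_nhdsWithin.mono fun _ hz => mem_Ioi.2 (sub_pos.2 hz)⟩
  filter_upwards [hslope.eventually_lt_const (lt_sub_iff_add_lt'.2 hr), hshift.eventually hw,
    self_mem_nhdsWithin] with z hlt hstep (hxz : x < z)
  have hpos : 0 < z - x := sub_pos.2 hxz
  have hsplit : u z = (u x + (z - x) • w) + (z - x) • (slope u x z - w) := by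
    rw [smul_sub, sub_smul_slope, vsub_eq_sub]
    abel
  rw [inv_mul_lt_iff₀ hpos]
  calc ‖u z‖ - ‖u x‖
      ≤ (1 + (z - x) * μ) * ‖u x‖ + (z - x) * ‖slope u x z - w‖ - ‖u x‖ := by
        gcongr
        nth_rw 1 [hsplit]
        refine (norm_add_le _ _).trans (add_le_add hstep ?_)
        rw [norm_smul, Real.norm_of_nonneg hpos.le]
    _ = (z - x) * (μ * ‖u x‖ + ‖slope u x z - w‖) := by ring
    _ < (z - x) * r := by
        gcongr
        exact lt_sub_iff_add_lt'.1 hlt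

theorem norm_le_gronwallBound_of_norm_add_smul_le {u w g : ℝ → E} {a b c : ℝ}
    (hu : ContinuousOn u (Icc a b))
    (hu' : ∀ t ∈ Ico a b, HasDerivWithinAt u (w t + g t) (Ici t) t)
    (hw : ∀ t ∈ Ico a b, ∀ᶠ h in 𝓝[>] (0 : ℝ), ‖u t + h • w t‖ ≤ (1 + h * μ) * ‖u t‖)
    (hg : ∀ t ∈ Ico a b, ‖g t‖ ≤ c) :
    ∀ t ∈ Icc a b, ‖u t‖ ≤ gronwallBound ‖u a‖ μ c (t - a) :=
  le_gronwallBound_of_liminf_deriv_right_le hu.norm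
    (fun t ht _ hr =>
      (eventually_slope_norm_lt_of_norm_add_smul_le (hu' t ht) (hw t ht) hr).frequently)
    le_rfl (fun t ht => add_le_add_right (hg t ht) _)

end LogNormGronwall

theorem gronwallBound_le_of_neg {δ K ε x : ℝ} (hK : K < 0) (hε : 0 ≤ ε) :
    gronwallBound δ K ε x ≤ Real.exp (K * x) * δ + (-1 / K) * ε := by
  rw [gronwallBound_of_K_ne_0 hK.ne]
  calc δ * Real.exp (K * x) + ε / K * (Real.exp (K * x) - 1)
      = Real.exp (K * x) * δ + (-1 / K) * ε + Real.exp (K * x) * (ε / K) := by ring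
    _ ≤ Real.exp (K * x) * δ + (-1 / K) * ε :=
        add_le_of_nonpos_right <| mul_nonpos_of_nonneg_of_nonpos (Real.exp_nonneg _) <|
          div_nonpos_of_nonneg_of_nonpos hε hK.le

theorem vecNormInf_eq_norm {m : ℕ} (v : Fin m → ℝ) : vecNormInf v = ‖v‖ := by
  refine le_antisymm (Real.iSup_le (norm_le_pi_norm v) (norm_nonneg v)) ?_
  exact (pi_norm_le_iff_of_nonneg (Real.iSup_nonneg fun i => abs_nonneg (v i))).2
    (le_ciSup (Set.finite_range fun i => |v i|).bddAbove)

theorem norm_mulVec_le_normInf_mul {m p : ℕ} (A : Matrix (Fin m) (Fin p) ℝ) (v : Fin p → ℝ) :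
    ‖A *ᵥ v‖ ≤ normInf A * ‖v‖ := by
  have hA : 0 ≤ normInf A := Real.iSup_nonneg fun i => sum_nonneg fun j _ => abs_nonneg (A i j)
  refine (pi_norm_le_iff_of_nonneg (mul_nonneg hA (norm_nonneg v))).2 fun i => ?_
  calc |∑ j, A i j * v j|
      ≤ ∑ j, |A i j * v j| := abs_sum_le_sum_abs _ _
    _ ≤ ∑ j, |A i j| * ‖v‖ := by
        gcongr with j
        rw [abs_mul]
        exact mul_le_mul_of_nonneg_left (norm_le_pi_norm v j) (abs_nonneg _)
    _ = (∑ j, |A i j|) * ‖v‖ := (sum_mul _ _ _).symm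
    _ ≤ normInf A * ‖v‖ := by
        gcongr
        exact le_ciSup (f := fun i => ∑ j, |A i j|) (Set.finite_range _).bddAbove i

section LogNorm

variable {m : ℕ} (A : Matrix (Fin m) (Fin m) ℝ)

theorem muInf_metzlerize : muInf (metzlerize A) = muInf A := by
  refine iSup_congr fun i => congrArg₂ (· + ·) (if_pos rfl) (sum_congr rfl fun j hj => ?_)
  have hij : i ≠ j := (mem_filter.1 hj).2.symm
  simp only [metzlerize, of_apply, if_neg hij, abs_abs]

variable {A}

theorem sum_abs_one_add_smul {h : ℝ} (hh : 0 ≤ h) {i : Fin m} (hi : 0 ≤ 1 + h * A i i) :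
    ∑ j, |(1 + h • A) i j| = 1 + h * (A i i + ∑ j ∈ univ.filter (· ≠ i), |A i j|) := by
  have hoff : ∀ j ∈ univ.erase i, |(1 + h • A) i j| = h * |A i j| := fun j hj => by
    simp [one_apply_ne' (ne_of_mem_erase hj), abs_mul, abs_of_nonneg hh]
  have hdiag : |(1 + h • A) i i| = 1 + h * A i i := by simpa using hi
  rw [← add_sum_erase _ _ (mem_univ i), sum_congr rfl hoff, hdiag, ← mul_sum, filter_ne']
  ring

theorem normInf_one_add_smul_le {h : ℝ} (hh : 0 ≤ h) (hA : ∀ i, 0 ≤ 1 + h * A i i) :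
    normInf (1 + h • A) ≤ 1 + h * muInf A := by
  cases isEmpty_or_nonempty (Fin m)
  · simp [normInf, muInf]
  · refine ciSup_le fun i => ?_
    rw [sum_abs_one_add_smul hh (hA i)]
    gcongr
    exact le_ciSup (f := fun i => A i i + ∑ j ∈ univ.filter (· ≠ i), |A i j|)
      (Set.finite_range _).bddAbove i

variable (A)

open Filter Topology in
theorem eventually_norm_add_smul_mulVec_le (v : Fin m → ℝ) :
    ∀ᶠ h in 𝓝[>] (0 : ℝ), ‖v + h • A *ᵥ v‖ ≤ (1 + h * muInf A) * ‖v‖ := by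
  have hdiag : ∀ᶠ h in 𝓝[>] (0 : ℝ), ∀ i, 0 < 1 + h * A i i := by
    refine nhdsWithin_le_nhds (eventually_all.2 fun i => ?_)
    have hcont : Continuous fun h : ℝ => 1 + h * A i i := by fun_prop
    exact hcont.continuousAt.eventually_const_lt (by simp)
  filter_upwards [hdiag, self_mem_nhdsWithin] with h hA (hh : 0 < h)
  calc ‖v + h • A *ᵥ v‖
      = ‖(1 + h • A) *ᵥ v‖ := by rw [add_mulVec, one_mulVec, smul_mulVec]
    _ ≤ normInf (1 + h • A) * ‖v‖ := norm_mulVec_le_normInf_mul _ v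
    _ ≤ (1 + h * muInf A) * ‖v‖ := by
        gcongr
        exact normInf_one_add_smul_le hh.le fun i => (hA i).le

end LogNorm

theorem framer_error_ISS_CT_general {m : ℕ} (A : Matrix (Fin m) (Fin m) ℝ) {f : ℝ → Fin m → ℝ}
    {c : ℝ} (hf : ∀ t : ℝ, 0 ≤ t → vecNormInf (f t) ≤ c) {eps : ℝ → Fin m → ℝ}
    (hcont : ContinuousOn eps (Set.Ici 0))
    (heps : ∀ t : ℝ, 0 ≤ t → HasDerivWithinAt eps (A *ᵥ eps t + f t) (Set.Ici t) t)
    {t : ℝ} (ht : 0 ≤ t) :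
    vecNormInf (eps t) ≤ gronwallBound (vecNormInf (eps 0)) (muInf A) c t := by
  simp only [vecNormInf_eq_norm] at hf ⊢
  simpa only [sub_zero] using norm_le_gronwallBound_of_norm_add_smul_le
    (hcont.mono Set.Icc_subset_Ici_self) (fun s hs => heps s hs.1)
    (fun s _ => eventually_norm_add_smul_mulVec_le A (eps s)) (fun s hs => hf s hs.1)
    t ⟨ht, le_rfl⟩

/-- input-to-state stability of the framer error (continuous-time case). -/
theorem framer_error_ISS_CT {m : ℕ} (Q : Matrix (Fin m) (Fin m) ℝ)
    (hq : muInf Q < 0) (f : Fin m → ℝ) (eps : ℝ → Fin m → ℝ)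
    (heps : ∀ t : ℝ, 0 ≤ t →
      HasDerivAt eps ((metzlerize Q).mulVec (eps t) + f) t) :
    ∀ t : ℝ, 0 ≤ t →
      vecNormInf (eps t) ≤ Real.exp (muInf Q * t) * vecNormInf (eps 0)
          + ((Real.exp (muInf Q * t) - 1) / muInf Q) * vecNormInf f ∧
      vecNormInf (eps t) ≤ Real.exp (muInf Q * t) * vecNormInf (eps 0)
          + (-1 / muInf Q) * vecNormInf f := by
  intro t ht
  have hbound := framer_error_ISS_CT_general (metzlerize Q) (fun _ _ => le_rfl)
    (fun s hs => (heps s hs).continuousAt.continuousWithinAt)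
    (fun s hs => (heps s hs).hasDerivWithinAt) ht
  rw [muInf_metzlerize] at hbound
  have hf : 0 ≤ vecNormInf f := Real.iSup_nonneg fun i => abs_nonneg (f i)
  refine ⟨hbound.trans_eq ?_, hbound.trans (gronwallBound_le_of_neg hq hf)⟩
  rw [gronwallBound_of_K_ne_0 hq.ne]
  ring
end
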